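/- Let (G,c,o) be a recurrent rooted network, h a potential on it, and v ≠ o a vertex. Then for all M > 0 and every integer ℓ with 0 < ℓ < d(o,v), the network random walk {X_t} started at o satisfies P_o(h(X_ℓ) ≥ M | τ_v < τ_o^+) ≤ h(v)/M, where τ_v is the hitting time of v and τ_o^+ = min{t ≥ 1 : X_t = o}. -/

import Mathlib

open scoped ENNReal
open Filter Topology Classical
noncomputable section

/-- A rooted network: a connected, locally finite simple graph with positive
symmetric edge conductances (extended by `0` to non-edges) and a root `o`. -/
structure RootedNetwork (V : Type*) where
  G : SimpleGraph V
  locallyFinite : ∀ x : V, (G.neighborSet x).Finite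
  connected : G.Connected
  c : V → V → ℝ
  c_symm : ∀ x y, c x y = c y x
  c_pos : ∀ x y, G.Adj x y → 0 < c x y
  c_eq_zero : ∀ x y, ¬ G.Adj x y → c x y = 0
  o : V

namespace RootedNetwork

variable {V : Type*}

/-- The vertex weight `c_x = Σ_{z ∼ x} c_{xz}`. -/
noncomputable def cv (N : RootedNetwork V) (x : V) : ℝ := ∑' y, N.c x y

/-- The transition probability `p(x,y) = c_{xy} / c_x` of the network random walk. -/
noncomputable def p (N : RootedNetwork V) (x y : V) : ℝ≥0∞ :=
  ENNReal.ofReal (N.c x y / N.cv x)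

/-- The probability that the network random walk started at `x` begins with the
given finite sequence of steps. -/
noncomputable def pathProb (N : RootedNetwork V) : V → List V → ℝ≥0∞
  | _, [] => 1
  | x, y :: l => N.p x y * pathProb N y l

/-- The probability, starting from `x`, that the walk ever visits `b`
(`P_x(τ_b < ∞)`), computed by decomposing over the finite path up to the first
visit of `b`. -/
noncomputable def hitProb (N : RootedNetwork V) (x b : V) : ℝ≥0∞ :=
  if x = b then 1
  else ∑' l : {l : List V // l.getLast? = some b ∧ b ∉ l.dropLast}, N.pathProb x l.1

/-- A rooted network is recurrent if the walk started from any vertex almost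
surely visits the root `o`. -/
def Recurrent (N : RootedNetwork V) : Prop := ∀ x : V, N.hitProb x N.o = 1

/-- The Green kernel `G_o(x,y) = Σ_{n ≥ 0} P_x(X_n = y, τ_o > n)` of the walk
killed at the root, computed as a sum over finite paths from `x` to `y`
avoiding `o` (the `n = 0` term is the first summand). -/
noncomputable def GreenKer (N : RootedNetwork V) (x y : V) : ℝ≥0∞ :=
  (if x = y ∧ x ≠ N.o then 1 else 0) +
    ∑' l : {l : List V // l.getLast? = some y ∧ N.o ∉ x :: l}, N.pathProb x l.1

/-- The Green density `g_o(x,y) = G_o(x,y) / c_y`. -/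
noncomputable def greenDensity (N : RootedNetwork V) (x y : V) : ℝ≥0∞ :=
  N.GreenKer x y / ENNReal.ofReal (N.cv y)

/-- The network Laplacian `Δ f (v) = Σ_{x ∼ v} c_{vx} (f(x) - f(v))`. -/
noncomputable def lap (N : RootedNetwork V) (f : V → ℝ) (v : V) : ℝ :=
  ∑' x, N.c v x * (f x - f v)

/-- A potential: a nonnegative function vanishing at `o`, with Laplacian `1`
at `o`, harmonic everywhere else. -/
def IsPotential (N : RootedNetwork V) (h : V → ℝ) : Prop :=
  (∀ v, 0 ≤ h v) ∧ h N.o = 0 ∧ N.lap h N.o = 1 ∧ ∀ v, v ≠ N.o → N.lap h v = 0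

end RootedNetwork
namespace RootedNetwork

variable {V : Type*}

/-- `P_o(τ_v < τ_o^+)`: the probability that the walk started at `o` hits `v`
before returning to `o`, decomposed over the path up to the first visit of `v`. -/
noncomputable def hitBeforeReturn (N : RootedNetwork V) (v : V) : ℝ≥0∞ :=
  ∑' l : {l : List V // l.getLast? = some v ∧ v ∉ l.dropLast ∧ N.o ∉ l},
    N.pathProb N.o l.1

/-- `P_o(oγ, τ_v < τ_o^+)`: the probability that the walk started at `o` begins
with the steps `γ` and hits `v` before returning to `o`. -/
noncomputable def pathThenHit (N : RootedNetwork V) (γ : List V) (v : V) : ℝ≥0∞ :=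
  ∑' l : {l : List V // γ <+: l ∧ l.getLast? = some v ∧ v ∉ l.dropLast ∧ N.o ∉ l},
    N.pathProb N.o l.1

end RootedNetwork
namespace RootedNetwork

/-- `P_o(h(X_ℓ) ≥ M, τ_v < τ_o^+)`: the probability that the walk started at
`o` satisfies `h(X_ℓ) ≥ M` and hits `v` before returning to `o`, decomposed
over the path up to the first visit of `v`. -/
noncomputable def levelThenHit {V : Type*} (N : RootedNetwork V) (h : V → ℝ)
    (M : ℝ) (ℓ : ℕ) (v : V) : ℝ≥0∞ :=
  ∑' l : {l : List V // l.getLast? = some v ∧ v ∉ l.dropLast ∧ N.o ∉ l ∧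
      M ≤ h ((N.o :: l).getD ℓ N.o)},
    N.pathProb N.o l.1

end RootedNetwork

namespace RootedNetwork

variable {V : Type*}

theorem aux_tsum_le {α : Type*} (P P' : α → Prop) (f : α → ℝ≥0∞)
    (H : ∀ x, P x → f x ≠ 0 → P' x) :
    ∑' x : {x // P x}, f x.1 ≤ ∑' x : {x // P' x}, f x.1 := by
  have e1 := tsum_subtype {x | P x} f
  have e2 := tsum_subtype {x | P' x} f
  refine e1.trans_le (le_trans ?_ e2.ge)
  refine ENNReal.tsum_le_tsum fun x => ?_
  by_cases hP : P x
  · by_cases hf : f x = 0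
    · simp [Set.indicator, hf]
    · simp [Set.indicator, hP, H x hP hf]
  · simp [Set.indicator, hP]

theorem aux_summable (N : RootedNetwork V) (x : V) (f : V → ℝ) :
    Summable fun y => N.c x y * f y := by
  apply summable_of_hasFiniteSupport
  refine (N.locallyFinite x).subset fun y hy => ?_
  by_contra hadj
  apply hy
  have : N.c x y = 0 := N.c_eq_zero x y hadj
  simp [this]

theorem aux_summable' (N : RootedNetwork V) (x : V) : Summable fun y => N.c x y := by
  simpa using N.aux_summable x (fun _ => 1)

theorem aux_c_nonneg (N : RootedNetwork V) (x y : V) : 0 ≤ N.c x y := by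
  by_cases hadj : N.G.Adj x y
  · exact (N.c_pos x y hadj).le
  · exact (N.c_eq_zero x y hadj).ge

theorem aux_cv_nonneg (N : RootedNetwork V) (x : V) : 0 ≤ N.cv x :=
  tsum_nonneg (N.aux_c_nonneg x)

theorem aux_c_le (N : RootedNetwork V) (x y : V) : N.c x y ≤ N.cv x :=
  (N.aux_summable' x).le_tsum y fun z _ => N.aux_c_nonneg x z

theorem aux_cv_mul_p (N : RootedNetwork V) (x y : V) :
    ENNReal.ofReal (N.cv x) * N.p x y = ENNReal.ofReal (N.c x y) := by
  rw [p, ← ENNReal.ofReal_mul (N.aux_cv_nonneg x)]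
  by_cases h0 : N.cv x = 0
  · have := N.aux_c_le x y
    have h2 := N.aux_c_nonneg x y
    have : N.c x y = 0 := by linarith
    simp [this]
  · rw [mul_div_cancel₀ _ h0]

theorem aux_pathProb_append (N : RootedNetwork V) (m l : List V) (x v : V) :
    N.pathProb x (m ++ v :: l) = N.pathProb x (m ++ [v]) * N.pathProb v l := by
  induction m generalizing x with
  | nil => simp [pathProb]
  | cons a m ih => simp [pathProb, ih, mul_assoc]

theorem aux_reverse (N : RootedNetwork V) (m : List V) (x y : V) :
    ENNReal.ofReal (N.cv x) * N.pathProb x (m ++ [y]) =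
      ENNReal.ofReal (N.cv y) * N.pathProb y (m.reverse ++ [x]) := by
  induction m generalizing x with
  | nil => simp [pathProb, aux_cv_mul_p, N.c_symm x y]
  | cons a m ih =>
    have e : (a :: m).reverse ++ [x] = m.reverse ++ a :: [x] := by simp
    rw [e, aux_pathProb_append N m.reverse, ← mul_assoc, ← ih a]
    simp only [List.cons_append, pathProb, mul_one]
    rw [← mul_assoc, aux_cv_mul_p, N.c_symm x a, ← aux_cv_mul_p]
    ring

theorem aux_dist (N : RootedNetwork V) (m : List V) (x v : V)
    (hne : N.pathProb x (m ++ [v]) ≠ 0) : N.G.dist x v ≤ m.length + 1 := by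
  have hp : ∀ x y, N.p x y ≠ 0 → N.G.dist x y ≤ 1 := by
    intro x y hxy
    by_cases hadj : N.G.Adj x y
    · exact (SimpleGraph.dist_eq_one_iff_adj.2 hadj).le
    · exact absurd (by simp [p, N.c_eq_zero x y hadj]) hxy
  induction m generalizing x with
  | nil =>
    simp only [List.nil_append, pathProb, mul_one] at hne
    simpa using hp _ _ hne
  | cons a m ih =>
    simp only [List.cons_append, pathProb] at hne
    have h1 := hp _ _ (left_ne_zero_of_mul hne)
    have h2 := ih a (right_ne_zero_of_mul hne)
    have h3 := N.connected.dist_triangle (u := x) (v := a) (w := v)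
    simp only [List.length_cons]
    omega

theorem aux_harm (N : RootedNetwork V) (h : V → ℝ) (hpot : N.IsPotential h)
    (M : ℝ) (hM : 0 < M) (x : V) (hx : x ≠ N.o) :
    ∑' y, N.p x y * ENNReal.ofReal (h y / M) ≤ ENNReal.ofReal (h x / M) := by
  obtain ⟨h0, -, -, hh⟩ := hpot
  have hs : Summable fun y => N.c x y * h y := N.aux_summable x h
  have key : ∑' y, N.c x y * h y = N.cv x * h x := by
    have := hh x hx
    rw [lap] at this
    simp only [mul_sub] at this
    rw [hs.tsum_sub (N.aux_summable x fun _ => h x), tsum_mul_right] at this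
    rw [cv]; linarith
  have e : ∀ y, N.p x y * ENNReal.ofReal (h y / M)
      = ENNReal.ofReal ((N.c x y * h y) * (1 / (N.cv x * M))) := by
    intro y
    rw [p, ← ENNReal.ofReal_mul (div_nonneg (N.aux_c_nonneg x y) (N.aux_cv_nonneg x))]
    congr 1
    rw [div_mul_div_comm, mul_one_div]
  simp only [e]
  rw [← ENNReal.ofReal_tsum_of_nonneg _ (hs.mul_right _), tsum_mul_right, key]
  · apply ENNReal.ofReal_le_ofReal
    by_cases hc : N.cv x = 0
    · simp only [hc]
      simpa using div_nonneg (h0 x) hM.le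
    · apply le_of_eq; field_simp
  · intro y
    have := N.aux_c_nonneg x y
    have := N.aux_cv_nonneg x
    have := h0 y
    positivity

theorem aux_hit_le (N : RootedNetwork V) (hrec : N.Recurrent) (x : V) (hx : x ≠ N.o) :
    ∑' m : {m : List V // N.o ∉ m}, N.pathProb x (m.1 ++ [N.o]) ≤ 1 := by
  rw [← hrec x, hitProb, if_neg hx]
  refine ENNReal.tsum_comp_le_tsum_of_injective
    (f := fun m : {m : List V // N.o ∉ m} =>
      (⟨m.1 ++ [N.o], by simpa using m.2⟩ :
        {l : List V // l.getLast? = some N.o ∧ N.o ∉ l.dropLast}))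
    ?_ (fun l => N.pathProb x l.1)
  intro a b hab
  simpa [Subtype.ext_iff] using hab

theorem aux_le_hit (N : RootedNetwork V) (hrec : N.Recurrent) (x : V) (hx : x ≠ N.o) :
    1 ≤ ∑' m : {m : List V // N.o ∉ m}, N.pathProb x (m.1 ++ [N.o]) := by
  rw [← hrec x, hitProb, if_neg hx]
  refine ENNReal.tsum_le_tsum_comp_of_surjective
    (f := fun m : {m : List V // N.o ∉ m} =>
      (⟨m.1 ++ [N.o], by simpa using m.2⟩ :
        {l : List V // l.getLast? = some N.o ∧ N.o ∉ l.dropLast}))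
    ?_ (fun l => N.pathProb x l.1)
  rintro ⟨l, h1, h2⟩
  obtain ⟨m, rfl⟩ := List.getLast?_eq_some_iff.1 h1
  exact ⟨⟨m, by simpa using h2⟩, rfl⟩

theorem aux_max_n (N : RootedNetwork V) (hrec : N.Recurrent) (h : V → ℝ)
    (hpot : N.IsPotential h) (M : ℝ) (hM : 0 < M) (n : ℕ) (x : V) (hx : x ≠ N.o) :
    ∑' m : {m : List V // N.o ∉ m ∧ (∃ y ∈ x :: m, M ≤ h y) ∧ m.length ≤ n},
      N.pathProb x (m.1 ++ [N.o]) ≤ ENNReal.ofReal (h x / M) := by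
  by_cases hxM : M ≤ h x
  · calc _ ≤ ∑' m : {m : List V // N.o ∉ m}, N.pathProb x (m.1 ++ [N.o]) :=
          aux_tsum_le _ _ (fun m => N.pathProb x (m ++ [N.o])) fun m hm _ => hm.1
      _ ≤ 1 := N.aux_hit_le hrec x hx
      _ ≤ _ := by
          rw [ENNReal.one_le_ofReal]
          exact (one_le_div hM).2 hxM
  · induction n generalizing x with
    | zero =>
      have : IsEmpty {m : List V // N.o ∉ m ∧ (∃ y ∈ x :: m, M ≤ h y) ∧ m.length ≤ 0} := by
        refine ⟨?_⟩
        rintro ⟨m, _, ⟨y, hy, hyM⟩, hm⟩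
        have : m = [] := by simpa using hm
        subst this
        simp only [List.mem_singleton] at hy
        exact hxM (hy ▸ hyM)
      simp
    | succ n ih =>
      have ih' : ∀ y, y ≠ N.o →
          ∑' m : {m : List V // N.o ∉ m ∧ (∃ z ∈ y :: m, M ≤ h z) ∧ m.length ≤ n},
            N.pathProb y (m.1 ++ [N.o]) ≤ ENNReal.ofReal (h y / M) := by
        intro y hy
        by_cases hyM : M ≤ h y
        · calc _ ≤ ∑' m : {m : List V // N.o ∉ m}, N.pathProb y (m.1 ++ [N.o]) :=
                aux_tsum_le _ _ (fun m => N.pathProb y (m ++ [N.o])) fun m hm _ => hm.1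
            _ ≤ 1 := N.aux_hit_le hrec y hy
            _ ≤ _ := by
                rw [ENNReal.one_le_ofReal]
                exact (one_le_div hM).2 hyM
        · exact ih y hy hyM
      have hsurj : Function.Surjective
        (fun s : (Σ y : {y : V // y ≠ N.o},
          {m : List V // N.o ∉ m ∧ (∃ z ∈ y.1 :: m, M ≤ h z) ∧ m.length ≤ n}) =>
          (⟨s.1.1 :: s.2.1, by
              refine ⟨?_, ?_, ?_⟩
              · simpa using ⟨s.1.2.symm, s.2.2.1⟩
              · obtain ⟨z, hz, hz2⟩ := s.2.2.2.1
                exact ⟨z, List.mem_cons_of_mem _ hz, hz2⟩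
              · simpa using s.2.2.2.2⟩ :
            {m : List V // N.o ∉ m ∧ (∃ y ∈ x :: m, M ≤ h y) ∧ m.length ≤ n + 1})) := by
        rintro ⟨m, h1, ⟨z, hz, hzM⟩, h3⟩
        cases m with
        | nil =>
          simp only [List.mem_singleton] at hz
          exact absurd (hz ▸ hzM) hxM
        | cons y m =>
          simp only [List.mem_cons, not_or] at h1
          refine ⟨⟨⟨y, Ne.symm h1.1⟩, ⟨m, h1.2, ⟨z, ?_, hzM⟩, by simpa using h3⟩⟩, rfl⟩
          rcases List.mem_cons.1 hz with rfl | hz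
          · exact absurd hzM hxM
          · exact hz
      refine (ENNReal.tsum_le_tsum_comp_of_surjective hsurj
        (fun m => N.pathProb x (m.1 ++ [N.o]))).trans ?_
      rw [ENNReal.tsum_sigma']
      simp only [List.cons_append, pathProb, ENNReal.tsum_mul_left]
      calc _ ≤ ∑' y : {y : V // y ≠ N.o}, N.p x y.1 * ENNReal.ofReal (h y.1 / M) :=
            ENNReal.tsum_le_tsum fun y => mul_le_mul_right (ih' y.1 y.2) _
        _ ≤ ∑' y, N.p x y * ENNReal.ofReal (h y / M) :=
            ENNReal.tsum_comp_le_tsum_of_injective Subtype.val_injective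
              (fun y => N.p x y * ENNReal.ofReal (h y / M))
        _ ≤ _ := N.aux_harm h hpot M hM x hx

theorem aux_max (N : RootedNetwork V) (hrec : N.Recurrent) (h : V → ℝ)
    (hpot : N.IsPotential h) (M : ℝ) (hM : 0 < M) (x : V) (hx : x ≠ N.o) :
    ∑' m : {m : List V // N.o ∉ m ∧ (∃ y ∈ x :: m, M ≤ h y)},
      N.pathProb x (m.1 ++ [N.o]) ≤ ENNReal.ofReal (h x / M) := by
  rw [ENNReal.tsum_eq_iSup_sum]
  refine iSup_le fun s => ?_
  refine le_trans ?_ (N.aux_max_n hrec h hpot M hM (s.sup fun m => m.1.length) x hx)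
  rw [← Finset.tsum_subtype s
    (fun m : {m : List V // N.o ∉ m ∧ (∃ y ∈ x :: m, M ≤ h y)} => N.pathProb x (m.1 ++ [N.o]))]
  refine ENNReal.tsum_comp_le_tsum_of_injective
    (f := fun m : {m // m ∈ s} => (⟨m.1.1, m.1.2.1, m.1.2.2,
        Finset.le_sup (f := fun m : {m : List V // N.o ∉ m ∧ (∃ y ∈ x :: m, M ≤ h y)} =>
          m.1.length) m.2⟩ :
      {m : List V // N.o ∉ m ∧ (∃ y ∈ x :: m, M ≤ h y) ∧
        m.length ≤ s.sup fun m => m.1.length}))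
    ?_ (fun m => N.pathProb x (m.1 ++ [N.o]))
  intro a b hab
  exact Subtype.ext (Subtype.ext (Subtype.mk.inj hab))

/-- Loops at `v` avoiding the root. -/
def loops (N : RootedNetwork V) (v : V) : ℝ≥0∞ :=
  ∑' l : {l : List V // (v :: l).getLast? = some v ∧ N.o ∉ l}, N.pathProb v l.1

/-- All paths from the root to `v` not returning to the root. -/
def allPaths (N : RootedNetwork V) (v : V) : ℝ≥0∞ :=
  ∑' m : {m : List V // N.o ∉ m}, N.pathProb N.o (m.1 ++ [v])

/-- All paths from the root to `v` not returning to the root, with level condition. -/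
def levPaths (N : RootedNetwork V) (h : V → ℝ) (M : ℝ) (v : V) : ℝ≥0∞ :=
  ∑' m : {m : List V // N.o ∉ m ∧ (∃ y ∈ v :: m, M ≤ h y)},
    N.pathProb N.o (m.1 ++ [v])

/-- Paths with the level condition at a fixed time. -/
def levPathsAt (N : RootedNetwork V) (h : V → ℝ) (M : ℝ) (k : ℕ) (v : V) : ℝ≥0∞ :=
  ∑' l : {l : List V // l.getLast? = some v ∧ N.o ∉ l ∧ M ≤ h ((N.o :: l).getD k N.o)},
    N.pathProb N.o l.1

theorem aux_allPaths (N : RootedNetwork V) (hrec : N.Recurrent) (v : V) (hv : v ≠ N.o) :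
    ENNReal.ofReal (N.cv v) ≤ ENNReal.ofReal (N.cv N.o) * N.allPaths v := by
  rw [allPaths, ← ENNReal.tsum_mul_left]
  rw [tsum_congr fun m : {m : List V // N.o ∉ m} => N.aux_reverse m.1 N.o v]
  rw [ENNReal.tsum_mul_left]
  refine le_mul_of_one_le_right' ((N.aux_le_hit hrec v hv).trans ?_)
  refine (ENNReal.tsum_le_tsum_comp_of_surjective
    (f := fun m : {m : List V // N.o ∉ m} =>
      (⟨m.1.reverse, by simpa using m.2⟩ : {m : List V // N.o ∉ m}))
    ?_ (fun l => N.pathProb v (l.1 ++ [N.o])))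
  rintro ⟨m, hm⟩
  exact ⟨⟨m.reverse, by simpa using hm⟩, by simp⟩

theorem aux_levPaths (N : RootedNetwork V) (hrec : N.Recurrent) (h : V → ℝ)
    (hpot : N.IsPotential h) (M : ℝ) (hM : 0 < M) (v : V) (hv : v ≠ N.o) :
    ENNReal.ofReal (N.cv N.o) * N.levPaths h M v ≤
      ENNReal.ofReal (N.cv v) * ENNReal.ofReal (h v / M) := by
  rw [levPaths, ← ENNReal.tsum_mul_left]
  rw [tsum_congr fun m : {m : List V // N.o ∉ m ∧ (∃ y ∈ v :: m, M ≤ h y)} =>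
    N.aux_reverse m.1 N.o v]
  rw [ENNReal.tsum_mul_left]
  gcongr
  refine le_trans ?_ (N.aux_max hrec h hpot M hM v hv)
  refine (ENNReal.tsum_comp_le_tsum_of_injective
    (f := fun m : {m : List V // N.o ∉ m ∧ (∃ y ∈ v :: m, M ≤ h y)} =>
      (⟨m.1.reverse, by simpa using m.2⟩ :
        {m : List V // N.o ∉ m ∧ (∃ y ∈ v :: m, M ≤ h y)}))
    ?_ (fun l => N.pathProb v (l.1 ++ [N.o])))
  intro a b hab
  simpa [Subtype.ext_iff] using hab

theorem aux_levAt_le (N : RootedNetwork V) (h : V → ℝ) (hpot : N.IsPotential h)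
    (M : ℝ) (hM : 0 < M) (k : ℕ) (v : V) :
    N.levPathsAt h M k v ≤ N.levPaths h M v := by
  have ho : ¬ M ≤ h N.o := by rw [hpot.2.1]; exact not_le.2 hM
  have hsurj : ∀ l : {l : List V // l.getLast? = some v ∧ N.o ∉ l ∧
      M ≤ h ((N.o :: l).getD k N.o)},
      ∃ m : {m : List V // N.o ∉ m ∧ (∃ y ∈ v :: m, M ≤ h y)}, m.1 ++ [v] = l.1 := by
    rintro ⟨l, h1, h2, h3⟩
    obtain ⟨m, rfl⟩ := List.getLast?_eq_some_iff.1 h1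
    refine ⟨⟨m, fun hm => h2 (by simp [hm]), (N.o :: (m ++ [v])).getD k N.o, ?_, h3⟩, rfl⟩
    by_cases hk : k < (N.o :: (m ++ [v])).length
    · have hmem : (N.o :: (m ++ [v])).getD k N.o ∈ N.o :: (m ++ [v]) := by
        rw [List.getD_eq_getElem _ _ hk]
        exact List.getElem_mem hk
      rcases List.mem_cons.1 hmem with he | he
      · rw [he] at h3; exact absurd h3 ho
      · simp only [List.mem_append, List.mem_singleton] at he
        rcases he with he | he
        · exact List.mem_cons_of_mem _ he
        · rw [he]; simp
    · rw [List.getD_eq_default _ _ (not_lt.1 hk)] at h3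
      exact absurd h3 ho
  choose g hg using hsurj
  rw [levPathsAt, levPaths]
  simp only [← hg]
  refine ENNReal.tsum_comp_le_tsum_of_injective (f := g) ?_
    (fun m => N.pathProb N.o (m.1 ++ [v]))
  intro a b hab
  apply Subtype.ext
  rw [← hg a, ← hg b, hab]

theorem aux_append (N : RootedNetwork V) (l l' : List V) (x v : V)
    (hl : l.getLast? = some v) :
    N.pathProb x (l ++ l') = N.pathProb x l * N.pathProb v l' := by
  obtain ⟨m, rfl⟩ := List.getLast?_eq_some_iff.1 hl
  rw [← aux_pathProb_append]; simp

theorem aux_allPaths_le (N : RootedNetwork V) (v : V) (hv : v ≠ N.o) :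
    N.allPaths v ≤ N.hitBeforeReturn v * N.loops v := by
  have hsurj : ∀ m : {m : List V // N.o ∉ m},
      ∃ s : {l : List V // l.getLast? = some v ∧ v ∉ l.dropLast ∧ N.o ∉ l} ×
        {l : List V // (v :: l).getLast? = some v ∧ N.o ∉ l},
        s.1.1 ++ s.2.1 = m.1 ++ [v] := by
    rintro ⟨m, hm⟩
    obtain ⟨as, bs, he, ha⟩ := List.eq_append_cons_of_mem (show v ∈ m ++ [v] by simp)
    have ho : N.o ∉ as ++ v :: bs := by
      rw [← he]; simp [hm, Ne.symm hv]
    have hlast : (as ++ v :: bs).getLast? = some v := by rw [← he]; simp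
    simp only [List.mem_append, List.mem_cons, not_or] at ho
    refine ⟨⟨⟨as ++ [v], by simp, by simpa using ha, by simp [ho.1, Ne.symm hv]⟩,
      ⟨bs, ?_, ho.2.2⟩⟩, by simp [he]⟩
    simpa [List.getLast?_append] using hlast
  choose g hg using hsurj
  rw [allPaths, hitBeforeReturn, loops, ← ENNReal.tsum_mul_right]
  simp only [← ENNReal.tsum_mul_left]
  rw [← ENNReal.tsum_prod (f := fun
    (a : {l : List V // l.getLast? = some v ∧ v ∉ l.dropLast ∧ N.o ∉ l})
    (b : {l : List V // (v :: l).getLast? = some v ∧ N.o ∉ l}) =>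
    N.pathProb N.o a.1 * N.pathProb v b.1)]
  have e : ∀ m : {m : List V // N.o ∉ m}, N.pathProb N.o (m.1 ++ [v]) =
      N.pathProb N.o (g m).1.1 * N.pathProb v (g m).2.1 := by
    intro m
    rw [← hg, aux_append _ _ _ _ v (g m).1.2.1]
  simp only [e]
  refine ENNReal.tsum_comp_le_tsum_of_injective (f := g) ?_
    (fun s => N.pathProb N.o s.1.1 * N.pathProb v s.2.1)
  intro a b hab
  have h1 := hg a
  rw [hab, hg b] at h1
  apply Subtype.ext
  simpa using h1.symm

theorem aux_level_le (N : RootedNetwork V) (h : V → ℝ) (M : ℝ) (k : ℕ) (v : V)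
    (hk : k < N.G.dist N.o v) :
    N.levelThenHit h M k v * N.loops v ≤ N.levPathsAt h M k v := by
  let A : List V → Prop := fun l => l.getLast? = some v ∧ v ∉ l.dropLast ∧ N.o ∉ l ∧
      M ≤ h ((N.o :: l).getD k N.o) ∧ k ≤ l.length
  have h1 : N.levelThenHit h M k v ≤ ∑' l : {l // A l}, N.pathProb N.o l.1 := by
    refine aux_tsum_le _ _ (fun l => N.pathProb N.o l) ?_
    rintro l ⟨a1, a2, a3, a4⟩ hne
    refine ⟨a1, a2, a3, a4, ?_⟩
    obtain ⟨m, rfl⟩ := List.getLast?_eq_some_iff.1 a1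
    have := N.aux_dist m _ _ hne
    simp only [List.length_append, List.length_singleton]
    omega
  refine (mul_le_mul_left h1 _).trans ?_
  rw [loops, levPathsAt, ← ENNReal.tsum_mul_right]
  simp only [← ENNReal.tsum_mul_left]
  rw [← ENNReal.tsum_prod (f := fun (a : {l : List V // A l})
    (b : {l : List V // (v :: l).getLast? = some v ∧ N.o ∉ l}) =>
    N.pathProb N.o a.1 * N.pathProb v b.1)]
  have e : ∀ s : {l : List V // A l} × {l : List V // (v :: l).getLast? = some v ∧ N.o ∉ l},
      N.pathProb N.o s.1.1 * N.pathProb v s.2.1 = N.pathProb N.o (s.1.1 ++ s.2.1) := by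
    intro s
    rw [aux_append _ _ _ _ v s.1.2.1]
  simp only [e]
  refine ENNReal.tsum_comp_le_tsum_of_injective
    (f := fun s : {l : List V // A l} ×
        {l : List V // (v :: l).getLast? = some v ∧ N.o ∉ l} =>
      (⟨s.1.1 ++ s.2.1, ?_⟩ : {l : List V // l.getLast? = some v ∧ N.o ∉ l ∧
        M ≤ h ((N.o :: l).getD k N.o)}))
    ?_ (fun l => N.pathProb N.o l.1)
  · obtain ⟨⟨l, a1, a2, a3, a4, a5⟩, ⟨l', b1, b2⟩⟩ := s
    refine ⟨?_, by simp [a3, b2], ?_⟩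
    · obtain ⟨m, rfl⟩ := List.getLast?_eq_some_iff.1 a1
      have : m ++ [v] ++ l' = m ++ v :: l' := by simp
      simp only [this, List.getLast?_append, b1]
      simp
    · rw [← List.cons_append, List.getD_append _ _ _ _ (by simp; omega)]
      exact a4
  · rintro ⟨⟨l, a1, a2, a3, a4, a5⟩, ⟨l', b1, b2⟩⟩ ⟨⟨r, c1, c2, c3, c4, c5⟩, ⟨r', d1, d2⟩⟩ hab
    obtain ⟨m, rfl⟩ := List.getLast?_eq_some_iff.1 a1
    obtain ⟨n, rfl⟩ := List.getLast?_eq_some_iff.1 c1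
    simp only [Subtype.mk.injEq, List.append_assoc, List.singleton_append] at hab
    obtain ⟨i, hi⟩ : m = n ∧ l' = r' := by
      clear e h1 a1 a3 a4 a5 c1 c3 c4 c5 b1 d1
      replace a2 : v ∉ m := by simpa using a2
      replace c2 : v ∉ n := by simpa using c2
      induction m generalizing n with
      | nil =>
        cases n with
        | nil => simpa using hab
        | cons b n => simp at hab c2; exact absurd hab.1 c2.1
      | cons a m ih =>
        cases n with
        | nil => simp at hab a2; exact absurd hab.1.symm a2.1
        | cons b n =>
          simp only [List.mem_cons, not_or] at a2 c2
          simp only [List.cons_append, List.cons.injEq] at hab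
          obtain ⟨i1, i2⟩ := ih n hab.2 a2.2 c2.2
          exact ⟨by rw [hab.1, i1], i2⟩
    subst i; subst hi; rfl

theorem aux_cv_ne (N : RootedNetwork V) (v : V) (hv : v ≠ N.o) :
    ENNReal.ofReal (N.cv v) ≠ 0 := by
  have : Nontrivial V := ⟨v, N.o, hv⟩
  obtain ⟨w, hw⟩ := N.connected.preconnected.exists_adj_of_nontrivial v
  have h1 := N.c_pos v w hw
  have h2 := N.aux_c_le v w
  rw [Ne, ENNReal.ofReal_eq_zero, not_le]
  linarith

end RootedNetwork

/-- In a recurrent rooted network with potential `h`, for every vertex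
`v ≠ o`, every `M > 0` and every integer `0 < ℓ < d(o,v)`, the walk started at
`o` satisfies `P_o(h(X_ℓ) ≥ M | τ_v < τ_o^+) ≤ h(v)/M`. -/
theorem condProb_level_le {V : Type*} (N : RootedNetwork V)
    (hrec : N.Recurrent) (h : V → ℝ) (hpot : N.IsPotential h)
    (v : V) (hv : v ≠ N.o) (M : ℝ) (hM : 0 < M)
    (ℓ : ℕ) (hl : 0 < ℓ) (hld : ℓ < N.G.dist N.o v) :
    N.levelThenHit h M ℓ v / N.hitBeforeReturn v ≤ ENNReal.ofReal (h v / M) := by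
  refine ENNReal.div_le_of_le_mul ?_
  set K := ENNReal.ofReal (h v / M)
  set q := N.hitBeforeReturn v
  set S := N.levelThenHit h M ℓ v
  have h0 := N.aux_cv_ne v hv
  have h1 := N.aux_allPaths hrec v hv
  have h2 := N.aux_levPaths hrec h hpot M hM v hv
  have h3 := N.aux_levAt_le h hpot M hM ℓ v
  have h4 := N.aux_allPaths_le v hv
  have h5 := N.aux_level_le h M ℓ v hld
  have key : ENNReal.ofReal (N.cv v) * S ≤ ENNReal.ofReal (N.cv v) * (K * q) := by
    calc ENNReal.ofReal (N.cv v) * S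
        ≤ (ENNReal.ofReal (N.cv N.o) * (q * N.loops v)) * S := by
          gcongr; exact h1.trans (by gcongr)
      _ = (ENNReal.ofReal (N.cv N.o) * (S * N.loops v)) * q := by ring
      _ ≤ (ENNReal.ofReal (N.cv N.o) * N.levPaths h M v) * q := by
          gcongr; exact h5.trans h3
      _ ≤ (ENNReal.ofReal (N.cv v) * K) * q := by gcongr
      _ = _ := by ring
  exact (ENNReal.mul_le_mul_iff_right h0 ENNReal.ofReal_ne_top).1 key
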